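/- Let g: ℝ^d → [0,∞] be strictly convex with g(0)=0, g(z)>0 for z≠0, g(z)=∞ outside a compact ball, invertible Hessian V=∇²g(0), and suppose g(z) − ½ zᵀVz = o(|z|²) as z→0. Let Λ_h = ∫_{ℝ^d} exp(−g(z)/h) dz. Then lim_{h→0+} Λ_h/(2πh)^{d/2} = 1/√(det ∇²g(0)). -/

import Mathlib

/-!
The substitution `z = √h u` turns `Λ_h / h^{d/2}` into `∫ exp(-g(√h u)/h) du`. As `h → 0+` the
integrand converges pointwise to `exp(-uᵀVu/2)` by the second-order expansion of `g` at the origin.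
A uniform integrable majorant `exp(-c‖u‖²)` comes from the global quadratic lower bound
`g z ≥ c‖z‖²` (`exists_quadratic_lower_bound`): near the origin this is the expansion together with
positive definiteness of `V`; further out, convexity along the ray from `0` to `z` gives linear
growth, which dominates a multiple of `‖z‖²` because `g = ∞` off a bounded ball. Dominated
convergence then gives the limit `∫ exp(-uᵀVu/2) du`, which is evaluated
(`integral_exp_neg_quadForm`) by writing `V = BᵀB` and changing variables by `B`.
-/

open MeasureTheory Real Filter Topology Metric

noncomputable section

/-- `exp(−t)` for `t ∈ [0,∞]`, with `exp(−∞) = 0`. -/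
def expNeg (t : ENNReal) : ℝ := if t = ⊤ then 0 else Real.exp (-t.toReal)

/-- The quadratic form `v ↦ vᵀ M v` of a matrix. -/
def quadForm {d : ℕ} (M : Matrix (Fin d) (Fin d) ℝ) (v : EuclideanSpace ℝ (Fin d)) : ℝ :=
  ∑ i, ∑ j, v i * M i j * v j

/-- The normalizing constant `Λ_h = ∫ exp(−g(z)/h) dz`. -/
def Lam {d : ℕ} (g : EuclideanSpace ℝ (Fin d) → ENNReal) (h : ℝ) : ℝ :=
  ∫ z, expNeg (g z / ENNReal.ofReal h)

lemma expNeg_measurable : Measurable expNeg := by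
  unfold expNeg
  exact Measurable.ite (measurableSet_singleton _) measurable_const
    (Real.measurable_exp.comp ENNReal.measurable_toReal.neg)

lemma expNeg_nonneg (t : ENNReal) : 0 ≤ expNeg t := by
  unfold expNeg
  split_ifs
  · exact le_rfl
  · positivity

lemma expNeg_le_exp {a : ℝ} {t : ENNReal} (h : ENNReal.ofReal a ≤ t) :
    expNeg t ≤ Real.exp (-a) := by
  unfold expNeg
  split_ifs with ht
  · positivity
  · rw [Real.exp_le_exp, neg_le_neg_iff]
    exact (ENNReal.ofReal_le_iff_le_toReal ht).1 h

lemma expNeg_of_ne_top {t : ENNReal} (h : t ≠ ⊤) : expNeg t = Real.exp (-t.toReal) := if_neg h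

lemma quadForm_smul {d : ℕ} (M : Matrix (Fin d) (Fin d) ℝ) (a : ℝ)
    (v : EuclideanSpace ℝ (Fin d)) : quadForm M (a • v) = a ^ 2 * quadForm M v := by
  simp only [quadForm, PiLp.smul_apply, smul_eq_mul, Finset.mul_sum]
  refine Finset.sum_congr rfl fun i _ => Finset.sum_congr rfl fun j _ => ?_
  ring

/-- A factorization `V = BᵀB`, recorded through its effect on the determinant and on the
quadratic form. -/
lemma exists_factor {d : ℕ} {V : Matrix (Fin d) (Fin d) ℝ} (hV : V.PosDef) :
    ∃ B : Matrix (Fin d) (Fin d) ℝ, B.det ≠ 0 ∧ V.det = B.det ^ 2 ∧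
      ∀ z, quadForm V z = ‖Matrix.toLpLin 2 2 B z‖ ^ 2 := by
  have hf : ∃ B : Matrix (Fin d) (Fin d) ℝ, V = B.transpose * B := by
    open scoped MatrixOrder Matrix.Norms.L2Operator in
    obtain ⟨B, hB⟩ := CStarAlgebra.nonneg_iff_eq_star_mul_self.mp hV.posSemidef.nonneg
    refine ⟨B, ?_⟩
    rw [hB, Matrix.star_eq_conjTranspose, Matrix.conjTranspose_eq_transpose_of_trivial]
  obtain ⟨B, hB⟩ := hf
  have hdet : V.det = B.det ^ 2 := by rw [hB, Matrix.det_mul, Matrix.det_transpose, sq]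
  refine ⟨B, fun h0 => ?_, hdet, fun z => ?_⟩
  · have := hV.det_pos
    simp [hdet, h0] at this
  · rw [EuclideanSpace.norm_sq_eq, quadForm]
    have h1 : ∀ i, ∑ j, z i * V i j * z j = z i * (V.mulVec z.ofLp) i := by
      intro i
      simp [Matrix.mulVec, dotProduct, Finset.mul_sum, mul_assoc]
    simp_rw [h1]
    change z.ofLp ⬝ᵥ V.mulVec z.ofLp = _
    rw [hB, ← Matrix.mulVec_mulVec, Matrix.dotProduct_mulVec, Matrix.vecMul_transpose]
    simp [dotProduct, Matrix.toLpLin_apply, sq]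

lemma integrable_exp_neg_mul_norm_sq {d : ℕ} {c : ℝ} (hc : 0 < c) :
    Integrable fun u : EuclideanSpace ℝ (Fin d) => Real.exp (-c * ‖u‖ ^ 2) := by
  -- A non-integrable function would have integral `0`, but the Gaussian integral is positive.
  refine not_imp_comm.1 integral_undef ?_
  rw [GaussianFourier.integral_rexp_neg_mul_sq_norm hc]
  positivity

/-- The multivariate Gaussian integral. -/
lemma integral_exp_neg_quadForm {d : ℕ} {V : Matrix (Fin d) (Fin d) ℝ} (hV : V.PosDef) :
    ∫ u : EuclideanSpace ℝ (Fin d), Real.exp (-((1 / 2) * quadForm V u)) =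
      (2 * π) ^ ((d : ℝ) / 2) * (1 / Real.sqrt V.det) := by
  obtain ⟨B, hB0, hdet, hq⟩ := exists_factor hV
  have hL : LinearMap.det (Matrix.toLpLin 2 2 B) ≠ 0 := by rwa [LinearMap.det_toLpLin]
  have hmap := Measure.map_linearMap_addHaar_eq_smul_addHaar
    (volume : Measure (EuclideanSpace ℝ (Fin d))) hL
  have hcont : Continuous (Matrix.toLpLin 2 2 B) := LinearMap.continuous_of_finiteDimensional _
  have h1 : ∫ u : EuclideanSpace ℝ (Fin d), Real.exp (-((1 / 2) * quadForm V u)) =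
      ∫ v, Real.exp (-(1 / 2) * ‖v‖ ^ 2)
        ∂(Measure.map (Matrix.toLpLin 2 2 B) (volume : Measure (EuclideanSpace ℝ (Fin d)))) := by
    rw [integral_map hcont.aemeasurable (by fun_prop)]
    simp_rw [hq, neg_mul]
  rw [h1, hmap, integral_smul_measure, GaussianFourier.integral_rexp_neg_mul_sq_norm (by norm_num),
    hdet, Real.sqrt_sq_eq_abs, LinearMap.det_toLpLin, ENNReal.toReal_ofReal (abs_nonneg _),
    finrank_euclideanSpace_fin, abs_inv, smul_eq_mul, mul_comm, one_div |B.det|]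
  congr 2
  ring

lemma exists_coercive {d : ℕ} {V : Matrix (Fin d) (Fin d) ℝ} (hV : V.PosDef) :
    ∃ c > 0, ∀ z : EuclideanSpace ℝ (Fin d), c * ‖z‖ ^ 2 ≤ quadForm V z := by
  obtain ⟨B, hB0, -, hq⟩ := exists_factor hV
  have hL : LinearMap.det (Matrix.toLpLin 2 2 B) ≠ 0 := by rwa [LinearMap.det_toLpLin]
  obtain ⟨K, hK, hanti⟩ := (Matrix.toLpLin 2 2 B).exists_antilipschitzWith
    (LinearMap.ker_eq_bot.2 ((LinearMap.equivOfDetNeZero _ hL).injective))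
  refine ⟨((K : ℝ) ^ 2)⁻¹, by positivity, fun z => ?_⟩
  have h1 : ‖z‖ ≤ K * ‖Matrix.toLpLin 2 2 B z‖ := by
    simpa [dist_eq_norm] using hanti.le_mul_dist z 0
  rw [hq, inv_mul_le_iff₀ (by positivity), ← mul_pow]
  gcongr

/-- Convexity propagates the quadratic lower bound from a neighbourhood of the origin to the
bounded effective domain of `g`. -/
lemma exists_quadratic_lower_bound {d : ℕ}
    {g : EuclideanSpace ℝ (Fin d) → ENNReal} (hg0 : g 0 = 0)
    (hgconv : ConvexOn ℝ {z | g z ≠ ⊤} fun z => (g z).toReal)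
    {R : ℝ} (hR : 0 < R) (hgtop : ∀ z : EuclideanSpace ℝ (Fin d), R < ‖z‖ → g z = ⊤)
    {V : Matrix (Fin d) (Fin d) ℝ} (hV : V.PosDef)
    (hgV : ∀ ε > 0, ∃ δ > 0, ∀ z : EuclideanSpace ℝ (Fin d), ‖z‖ < δ →
      g z ≠ ⊤ ∧ |(g z).toReal - (1/2) * quadForm V z| ≤ ε * ‖z‖ ^ 2) :
    ∃ c > 0, ∀ z, ENNReal.ofReal (c * ‖z‖ ^ 2) ≤ g z := by
  obtain ⟨c₀, hc₀, hq⟩ := exists_coercive hV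
  obtain ⟨δ, hδ, hloc⟩ := hgV (c₀ / 4) (by positivity)
  have hnear : ∀ z : EuclideanSpace ℝ (Fin d), ‖z‖ < δ → c₀ / 4 * ‖z‖ ^ 2 ≤ (g z).toReal := by
    intro z hz
    have h1 := (abs_le.1 (hloc z hz).2).1
    linarith [hq z]
  refine ⟨min (c₀ / 4) (c₀ / 4 * (δ / 2) / R), by positivity, fun z => ?_⟩
  by_cases hz : g z = ⊤
  · simp [hz]
  rw [ENNReal.ofReal_le_iff_le_toReal hz]
  rcases lt_or_ge ‖z‖ δ with hzδ | hzδ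
  · refine le_trans ?_ (hnear z hzδ)
    gcongr
    exact min_le_left _ _
  have hzR : ‖z‖ ≤ R := not_lt.1 fun h => hz (hgtop z h)
  have hzpos : 0 < ‖z‖ := hδ.trans_le hzδ
  -- The point of the segment `[0, z]` at distance `δ / 2` from the origin.
  set t : ℝ := δ / 2 / ‖z‖ with ht
  have ht0 : 0 < t := by positivity
  have ht1 : t ≤ 1 := by rw [ht, div_le_one hzpos]; linarith
  have hnorm : ‖t • z‖ = δ / 2 := by
    rw [norm_smul, Real.norm_of_nonneg ht0.le, ht, div_mul_cancel₀ _ hzpos.ne']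
  have hconv : (g (t • z)).toReal ≤ t * (g z).toReal := by
    have := hgconv.2 (x := z) (y := 0) hz (by simp [hg0]) ht0.le (sub_nonneg.2 ht1)
      (by ring)
    simpa [hg0] using this
  have h2 := hnear (t • z) (by rw [hnorm]; linarith)
  rw [hnorm] at h2
  have h3 : c₀ / 4 * (δ / 2) * ‖z‖ ≤ (g z).toReal := by
    have h4 : c₀ / 4 * (δ / 2) ^ 2 ≤ δ / 2 / ‖z‖ * (g z).toReal := h2.trans hconv
    rw [div_mul_eq_mul_div (δ / 2), le_div_iff₀ hzpos] at h4
    have hδ2 : 0 < δ / 2 := by positivity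
    refine le_of_mul_le_mul_left ?_ hδ2
    linarith
  refine le_trans ?_ h3
  calc min (c₀ / 4) (c₀ / 4 * (δ / 2) / R) * ‖z‖ ^ 2
      ≤ c₀ / 4 * (δ / 2) / R * (R * ‖z‖) := by
        rw [sq]
        gcongr
        exact min_le_right _ _
    _ = c₀ / 4 * (δ / 2) * ‖z‖ := by field_simp

lemma tendsto_rescaled_integrand {d : ℕ}
    {g : EuclideanSpace ℝ (Fin d) → ENNReal} {V : Matrix (Fin d) (Fin d) ℝ}
    (hgV : ∀ ε > 0, ∃ δ > 0, ∀ z : EuclideanSpace ℝ (Fin d), ‖z‖ < δ →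
      g z ≠ ⊤ ∧ |(g z).toReal - (1/2) * quadForm V z| ≤ ε * ‖z‖ ^ 2)
    (u : EuclideanSpace ℝ (Fin d)) :
    Tendsto (fun h : ℝ => expNeg (g (√h • u) / ENNReal.ofReal h)) (𝓝[>] 0)
      (𝓝 (Real.exp (-((1 / 2) * quadForm V u)))) := by
  have hsmall : ∀ δ > 0, ∀ᶠ h : ℝ in 𝓝[>] 0, ‖√h • u‖ < δ := by
    intro δ hδ
    have hc : Continuous fun h : ℝ => ‖√h • u‖ := by fun_prop
    have h0 := (hc.tendsto 0).mono_left (nhdsWithin_le_nhds (s := Set.Ioi 0))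
    exact h0.eventually_lt_const (by simpa using hδ)
  have hlim : Tendsto (fun h : ℝ => (g (√h • u)).toReal / h) (𝓝[>] 0)
      (𝓝 ((1 / 2) * quadForm V u)) := by
    rw [Metric.tendsto_nhds]
    intro η hη
    obtain ⟨δ, hδ, hloc⟩ := hgV (η / (‖u‖ ^ 2 + 1)) (by positivity)
    filter_upwards [hsmall δ hδ, self_mem_nhdsWithin] with h hh hpos
    have hpos : 0 < h := hpos
    have h1 := (hloc _ hh).2
    rw [quadForm_smul, norm_smul, mul_pow, Real.norm_of_nonneg (Real.sqrt_nonneg h),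
      Real.sq_sqrt hpos.le] at h1
    rw [Real.dist_eq]
    have h2 : (g (√h • u)).toReal / h - 1 / 2 * quadForm V u =
        ((g (√h • u)).toReal - 1 / 2 * (h * quadForm V u)) / h := by field_simp
    rw [h2, abs_div, abs_of_pos hpos, div_lt_iff₀ hpos]
    refine h1.trans_lt ?_
    rw [div_mul_eq_mul_div, div_lt_iff₀ (by positivity)]
    nlinarith [mul_pos hη hpos]
  obtain ⟨δ, hδ, hloc⟩ := hgV 1 one_pos
  refine ((Real.continuous_exp.tendsto _).comp hlim.neg).congr' ?_
  filter_upwards [hsmall δ hδ, self_mem_nhdsWithin] with h hh hpos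
  have hpos : 0 < h := hpos
  rw [expNeg_of_ne_top (ENNReal.div_ne_top (hloc _ hh).1 (by simpa using hpos)),
    ENNReal.toReal_div, ENNReal.toReal_ofReal hpos.le]
  rfl

/-- Lemma 1(i): Laplace asymptotics `Λ_h/(2πh)^{d/2} → 1/√(det ∇²g(0))` as `h → 0+`. -/
theorem laplace_asymptotics_normalizing_constant (d : ℕ) (hd : 1 ≤ d)
    (g : EuclideanSpace ℝ (Fin d) → ENNReal) (hgmeas : Measurable g)
    (hg0 : g 0 = 0) (hgpos : ∀ z, z ≠ 0 → 0 < g z)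
    (hgconv : StrictConvexOn ℝ {z | g z ≠ ⊤} fun z => (g z).toReal)
    (R : ℝ) (hR : 0 < R) (hgtop : ∀ z : EuclideanSpace ℝ (Fin d), R < ‖z‖ → g z = ⊤)
    (V : Matrix (Fin d) (Fin d) ℝ) (hV : V.PosDef)
    (hgV : ∀ ε > 0, ∃ δ > 0, ∀ z : EuclideanSpace ℝ (Fin d), ‖z‖ < δ →
      g z ≠ ⊤ ∧ |(g z).toReal - (1/2) * quadForm V z| ≤ ε * ‖z‖ ^ 2) :
    Tendsto (fun h : ℝ => Lam g h / (2 * π * h) ^ ((d : ℝ)/2)) (𝓝[>] (0:ℝ))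
      (𝓝 (1 / Real.sqrt V.det)) := by
  obtain ⟨c, hc, hlow⟩ := exists_quadratic_lower_bound hg0 hgconv.convexOn hR hgtop hV hgV
  have hdom : Tendsto (fun h : ℝ => ∫ u, expNeg (g (√h • u) / ENNReal.ofReal h)) (𝓝[>] 0)
      (𝓝 (∫ u : EuclideanSpace ℝ (Fin d), Real.exp (-((1 / 2) * quadForm V u)))) := by
    refine tendsto_integral_filter_of_dominated_convergence
      (fun u => Real.exp (-c * ‖u‖ ^ 2)) ?_ ?_ (integrable_exp_neg_mul_norm_sq hc)
      (ae_of_all _ (tendsto_rescaled_integrand hgV))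
    · refine Eventually.of_forall fun h => (expNeg_measurable.comp ?_).aestronglyMeasurable
      exact (hgmeas.comp (measurable_const_smul _)).div_const _
    · filter_upwards [self_mem_nhdsWithin] with h hpos
      have hpos : 0 < h := hpos
      refine ae_of_all _ fun u => ?_
      rw [Real.norm_of_nonneg (expNeg_nonneg _), neg_mul]
      refine expNeg_le_exp ?_
      rw [ENNReal.le_div_iff_mul_le (by simp [hpos]) (by simp),
        ← ENNReal.ofReal_mul (by positivity)]
      refine le_trans (le_of_eq ?_) (hlow _)
      rw [norm_smul, mul_pow, Real.norm_of_nonneg (Real.sqrt_nonneg h), Real.sq_sqrt hpos.le]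
      ring_nf
  rw [integral_exp_neg_quadForm hV] at hdom
  have h2π : (0 : ℝ) < (2 * π) ^ ((d : ℝ) / 2) := by positivity
  have hfin := hdom.const_mul (((2 * π) ^ ((d : ℝ) / 2))⁻¹)
  rw [inv_mul_cancel_left₀ h2π.ne'] at hfin
  refine hfin.congr' ?_
  filter_upwards [self_mem_nhdsWithin] with h hpos
  have hpos : 0 < h := hpos
  rw [Measure.integral_comp_smul_of_nonneg volume
    (fun z => expNeg (g z / ENNReal.ofReal h)) (√h) (hR := Real.sqrt_nonneg h),
    finrank_euclideanSpace_fin, Real.mul_rpow (by positivity) hpos.le,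
    Real.sqrt_eq_rpow, ← Real.rpow_natCast, ← Real.rpow_mul hpos.le, smul_eq_mul, Lam,
    one_div_mul_eq_div]
  field_simp
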